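/- Let ℓ > 0, σ ∈ (0,1) ∪ (1,2), k an integer with k ≥ 1, and λ_k = (k+2)(2k+3)/(ℓ³(k+1)). Then for every x ∈ (0, ℓ], the left Riemann–Liouville fractional derivative of order σ of the function t ↦ λ_k t² · P_k^{(1,1)}(2t/ℓ - 1) exists at x and equals ((k+2)Γ(k+4))/(ℓ³(k+1)Γ(k+3-σ)) · x^{2-σ} · P_k^{(1+σ, 2-σ)}(2x/ℓ - 1) + (Γ(k+3))/(ℓ³Γ(k+2-σ)) · x^{2-σ} · P_{k-1}^{(1+σ, 2-σ)}(2x/ℓ - 1). -/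

import Mathlib

/-!
The Riemann–Liouville derivative of order `σ` acts on powers by
`t ^ p ↦ Γ(p + 1) / Γ(p + 1 - σ) * x ^ (p - σ)`: the fractional integral is a Beta integral, and the
remaining `m` ordinary derivatives cancel the surplus Gamma factors (`leftRL_deriv_sum`).

The Jacobi polynomials have the expansion `P_n^{(a,b)}(2 t - 1) = ∑ j, jacCoeff a b n j * t ^ j`
with coefficients that are explicit Gamma quotients (`jacobiP_eq_sum`); it follows from the
three-term recurrence, checked coefficientwise. Two facts can be read off from the coefficients:
* `(2k+3) P_k^{(1,1)} = (k+3) P_k^{(1,2)} + (k+1) P_{k-1}^{(1,2)}` (`jacCoeff_connection`);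
* the multiplier `Γ(j + 3) / Γ(j + 3 - σ)`, which the fractional derivative applies to
  `t ^ 2 * t ^ j`, turns `P_n^{(1,2)}` into `Γ(n + 3) / Γ(n + 3 - σ) * P_n^{(1+σ,2-σ)}`
  (`jacCoeff_shift`).

Combining them term by term, with `(k + 3) Γ(k + 3) = Γ(k + 4)` and `(k + 2) Γ(k + 2) = Γ(k + 3)`,
gives the closed form.
-/

/-- Coefficient `A_j^{a,b}` in the three-term recurrence of Jacobi polynomials. -/
noncomputable def jacobiA (a b : ℝ) (j : ℕ) : ℝ :=
  (a + b + 2*j + 1) * (a + b + 2*j + 2) / (2*(j+1)*(a + b + j + 1))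

/-- Coefficient `B_j^{a,b}` in the three-term recurrence of Jacobi polynomials. -/
noncomputable def jacobiB (a b : ℝ) (j : ℕ) : ℝ :=
  (b^2 - a^2) * (a + b + 2*j + 1) / (2*(j+1)*(a + b + j + 1)*(a + b + 2*j))

/-- Coefficient `C_j^{a,b}` in the three-term recurrence of Jacobi polynomials. -/
noncomputable def jacobiC (a b : ℝ) (j : ℕ) : ℝ :=
  (a + j)*(b + j)*(a + b + 2*j + 2) / ((j+1)*(a + b + j + 1)*(a + b + 2*j))

/-- The Jacobi polynomial `P_j^{(a,b)}(x)` defined via the three-term recurrence. -/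
noncomputable def jacobiP (a b : ℝ) : ℕ → ℝ → ℝ
  | 0, _ => 1
  | 1, x => ((a + b + 2)*x + a - b)/2
  | (j+2), x =>
      (jacobiA a b (j+1) * x - jacobiB a b (j+1)) * jacobiP a b (j+1) x
        - jacobiC a b (j+1) * jacobiP a b j x

/-- The function whose `m`-th derivative is the left Riemann–Liouville fractional
derivative of order `σ` of `g` (with base point 0), i.e.
`y ↦ (1/Γ(m-σ)) ∫₀ʸ (y-t)^{m-σ-1} g(t) dt`. -/
noncomputable def leftRLFun (σ : ℝ) (m : ℕ) (g : ℝ → ℝ) : ℝ → ℝ :=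
  fun y => (1 / Real.Gamma ((m : ℝ) - σ)) * ∫ t in (0:ℝ)..y, (y - t) ^ ((m : ℝ) - σ - 1) * g t

/-- The function whose `m`-th derivative is the right Riemann–Liouville fractional
derivative of order `σ` of `g` on `[·, ℓ]`, i.e.
`y ↦ ((-1)^m/Γ(m-σ)) ∫ᵧ^ℓ (t-y)^{m-σ-1} g(t) dt`. -/
noncomputable def rightRLFun (σ : ℝ) (m : ℕ) (ℓ : ℝ) (g : ℝ → ℝ) : ℝ → ℝ :=
  fun y => ((-1:ℝ)^m / Real.Gamma ((m : ℝ) - σ)) * ∫ t in y..ℓ, (t - y) ^ ((m : ℝ) - σ - 1) * g t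

/-- `F` has derivatives up to order `m` at `x` (so that `iteratedDeriv m F x`
is a genuine `m`-th derivative). -/
def HasIterDerivAt (m : ℕ) (F : ℝ → ℝ) (x : ℝ) : Prop :=
  ∀ j < m, DifferentiableAt ℝ (iteratedDeriv j F) x

/-- Normalization constant `λ_k`. -/
noncomputable def lamCoef (ℓ : ℝ) (k : ℕ) : ℝ := (k+2)*(2*k+3)/(ℓ^3*(k+1))

/-- The basis function `φ_k(x) = λ_k x(ℓ-x) P_k^{(1,1)}(2x/ℓ - 1)`. -/
noncomputable def phiFun (ℓ : ℝ) (k : ℕ) (x : ℝ) : ℝ :=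
  lamCoef ℓ k * (x*(ℓ-x)) * jacobiP 1 1 k (2*x/ℓ - 1)

/-! ### Power expansion of the Jacobi polynomials -/

/-- The coefficient of `t ^ j` in `P_n^{(a,b)}(2 t - 1)`.  The factor `(Γ(n - j + 1))⁻¹` is zero for
`j > n` because `Real.Gamma` vanishes at nonpositive integers. -/
noncomputable def jacCoeff (a b : ℝ) (n j : ℕ) : ℝ :=
  (-1) ^ (n + j) * Real.Gamma (n + b + 1) * Real.Gamma (n + a + b + 1 + j)
    * (Real.Gamma (n + a + b + 1))⁻¹ * (Real.Gamma (j + b + 1))⁻¹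
    * (Real.Gamma ((n : ℝ) - j + 1))⁻¹ * (Real.Gamma ((j : ℝ) + 1))⁻¹

/-- Unlike `Real.Gamma_add_one`, this form needs no hypothesis: both sides vanish at `x = 0`. -/
lemma gamma_inv_eq (x : ℝ) : (Real.Gamma x)⁻¹ = x * (Real.Gamma (x + 1))⁻¹ := by
  rcases eq_or_ne x 0 with rfl | h
  · simp
  · rw [Real.Gamma_add_one h]
    field_simp

lemma gamma_succ_of_pos {x y : ℝ} (hx : 0 < x) (hy : y = x + 1) :
    Real.Gamma y = x * Real.Gamma x := by
  rw [hy, Real.Gamma_add_one hx.ne']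

lemma gamma_inv_succ {x y : ℝ} (hy : y = x + 1) :
    (Real.Gamma x)⁻¹ = x * (Real.Gamma y)⁻¹ := by
  rw [hy, ← gamma_inv_eq]

lemma jacCoeff_eq_zero (a b : ℝ) {n j : ℕ} (h : n < j) : jacCoeff a b n j = 0 := by
  have : Real.Gamma ((n : ℝ) - j + 1) = 0 := by
    obtain ⟨d, rfl⟩ := Nat.exists_eq_add_of_lt h
    rw [show (n : ℝ) - ((n + d + 1 : ℕ) : ℝ) + 1 = -(d : ℝ) by push_cast; ring]
    exact Real.Gamma_neg_nat_eq_zero d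
  simp [jacCoeff, this]

lemma jacCoeff_rec_succ (a b : ℝ) (hb : 0 < b) (hs : 0 < a + b) (n j : ℕ) :
    jacCoeff a b (n + 2) (j + 1) =
      2 * jacobiA a b (n + 1) * jacCoeff a b (n + 1) j
      - (jacobiA a b (n + 1) + jacobiB a b (n + 1)) * jacCoeff a b (n + 1) (j + 1)
      - jacobiC a b (n + 1) * jacCoeff a b n (j + 1) := by
  have hn : (0 : ℝ) ≤ n := n.cast_nonneg
  have hj : (0 : ℝ) ≤ j := j.cast_nonneg
  -- Only `s = a + b` and `b` enter the Gamma factors.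
  obtain ⟨s, rfl⟩ : ∃ s, a = s - b := ⟨a + b, by ring⟩
  have hs' : 0 < s := by linarith
  unfold jacCoeff jacobiA jacobiB jacobiC
  push_cast
  rw [gamma_succ_of_pos (x := n + b + 1 + 1) (y := (n : ℝ) + 2 + b + 1) (by positivity) (by ring),
    gamma_succ_of_pos (x := n + b + 1) (y := (n : ℝ) + b + 1 + 1) (by positivity) (by ring),
    gamma_succ_of_pos (x := n + b + 1) (y := (n : ℝ) + 1 + b + 1) (by positivity) (by ring),
    gamma_succ_of_pos (x := n + s + j + 3) (y := (n : ℝ) + 2 + (s - b) + b + 1 + (j + 1))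
      (by positivity) (by ring),
    gamma_succ_of_pos (x := n + s + j + 2) (y := (n : ℝ) + s + j + 3) (by positivity) (by ring),
    gamma_succ_of_pos (x := n + s + j + 2) (y := (n : ℝ) + 1 + (s - b) + b + 1 + (j + 1))
      (by positivity) (by ring),
    show (n : ℝ) + 1 + (s - b) + b + 1 + j = n + s + j + 2 by ring,
    show (n : ℝ) + (s - b) + b + 1 + (j + 1) = n + s + j + 2 by ring,
    gamma_succ_of_pos (x := n + s + 2) (y := (n : ℝ) + 2 + (s - b) + b + 1) (by positivity)
      (by ring),
    show (n : ℝ) + 1 + (s - b) + b + 1 = n + s + 2 by ring,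
    gamma_succ_of_pos (x := n + s + 1) (y := (n : ℝ) + s + 2) (by positivity) (by ring),
    show (n : ℝ) + (s - b) + b + 1 = n + s + 1 by ring,
    gamma_succ_of_pos (x := j + b + 1) (y := (j : ℝ) + 1 + b + 1) (by positivity) (by ring),
    gamma_succ_of_pos (x := (j : ℝ) + 1) (y := (j : ℝ) + 1 + 1) (by positivity) (by ring),
    show (n : ℝ) + 2 - (j + 1) + 1 = n - j + 2 by ring,
    show (n : ℝ) + 1 - j + 1 = n - j + 2 by ring,
    gamma_inv_succ (x := (n : ℝ) - (j + 1) + 1) (y := n - j + 1) (by ring),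
    show (n : ℝ) + 1 - (j + 1) + 1 = n - j + 1 by ring,
    gamma_inv_succ (x := (n : ℝ) - j + 1) (y := n - j + 2) (by ring)]
  have e1 : Real.Gamma ((n : ℝ) + s + 1) ≠ 0 := (Real.Gamma_pos_of_pos (by positivity)).ne'
  have e2 : Real.Gamma ((j : ℝ) + b + 1) ≠ 0 := (Real.Gamma_pos_of_pos (by positivity)).ne'
  have e3 : Real.Gamma ((j : ℝ) + 1) ≠ 0 := (Real.Gamma_pos_of_pos (by positivity)).ne'
  generalize Real.Gamma ((n : ℝ) + s + 1) = G1 at *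
  generalize Real.Gamma ((j : ℝ) + b + 1) = G2 at *
  generalize Real.Gamma ((j : ℝ) + 1) = G3 at *
  -- This reciprocal may be zero (large `j`), so it is kept as a factor and never cancelled.
  generalize (Real.Gamma ((n : ℝ) - j + 2))⁻¹ = R at *
  generalize Real.Gamma ((n : ℝ) + s + j + 2) = H at *
  generalize Real.Gamma ((n : ℝ) + b + 1) = B at *
  have p1 : (s - b + b : ℝ) = s := by ring
  simp only [p1]
  generalize (j : ℝ) = y at *
  generalize (n : ℝ) = z at *
  have q1 : z + s + 1 ≠ 0 := by positivity
  have q2 : z + s + 2 ≠ 0 := by positivity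
  have q3 : y + b + 1 ≠ 0 := by positivity
  have q4 : y + 1 ≠ 0 := by positivity
  have q5 : s + 2 * (z + 1) ≠ 0 := by positivity
  have q6 : s + (z + 1) + 1 ≠ 0 := by positivity
  have q7 : z + 1 + 1 ≠ 0 := by positivity
  simp only [pow_add, pow_one]
  generalize ((-1 : ℝ) ^ n) = u
  generalize ((-1 : ℝ) ^ j) = v
  field_simp
  ring

lemma jacCoeff_rec_zero (a b : ℝ) (hb : 0 < b) (hs : 0 < a + b) (n : ℕ) :
    jacCoeff a b (n + 2) 0 =
      - (jacobiA a b (n + 1) + jacobiB a b (n + 1)) * jacCoeff a b (n + 1) 0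
      - jacobiC a b (n + 1) * jacCoeff a b n 0 := by
  have hn : (0 : ℝ) ≤ n := n.cast_nonneg
  -- Only `s = a + b` and `b` enter the Gamma factors.
  obtain ⟨s, rfl⟩ : ∃ s, a = s - b := ⟨a + b, by ring⟩
  have hs' : 0 < s := by linarith
  unfold jacCoeff jacobiA jacobiB jacobiC
  have p1 : (s - b + b : ℝ) = s := by ring
  push_cast
  simp only [add_zero, sub_zero, zero_add, add_assoc _ (s - b) b, p1]
  have g1 : Real.Gamma ((n : ℝ) + 2 + s + 1) ≠ 0 := (Real.Gamma_pos_of_pos (by positivity)).ne'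
  have g2 : Real.Gamma ((n : ℝ) + 1 + s + 1) ≠ 0 := (Real.Gamma_pos_of_pos (by positivity)).ne'
  have g3 : Real.Gamma ((n : ℝ) + s + 1) ≠ 0 := (Real.Gamma_pos_of_pos (by positivity)).ne'
  rw [gamma_succ_of_pos (x := n + b + 1 + 1) (y := (n : ℝ) + 2 + b + 1) (by positivity) (by ring),
    gamma_succ_of_pos (x := n + b + 1) (y := (n : ℝ) + b + 1 + 1) (by positivity) (by ring),
    gamma_succ_of_pos (x := n + b + 1) (y := (n : ℝ) + 1 + b + 1) (by positivity) (by ring),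
    gamma_succ_of_pos (x := (n : ℝ) + 1 + 1) (y := (n : ℝ) + 2 + 1) (by positivity) (by ring),
    gamma_succ_of_pos (x := (n : ℝ) + 1) (y := (n : ℝ) + 1 + 1) (by positivity) (by ring)]
  have g4 : Real.Gamma ((n : ℝ) + 1) ≠ 0 := (Real.Gamma_pos_of_pos (by positivity)).ne'
  have g5 : Real.Gamma (b + 1) ≠ 0 := (Real.Gamma_pos_of_pos (by positivity)).ne'
  generalize Real.Gamma ((n : ℝ) + 2 + s + 1) = G1 at *
  generalize Real.Gamma ((n : ℝ) + 1 + s + 1) = G2 at *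
  generalize Real.Gamma ((n : ℝ) + s + 1) = G3 at *
  generalize Real.Gamma ((n : ℝ) + 1) = G4 at *
  generalize Real.Gamma (b + 1) = G5 at *
  generalize Real.Gamma ((n : ℝ) + b + 1) = B at *
  generalize (n : ℝ) = z at *
  have q4 : z + 1 ≠ 0 := by positivity
  have q5 : s + 2 * (z + 1) ≠ 0 := by positivity
  have q6 : s + (z + 1) + 1 ≠ 0 := by positivity
  have q7 : z + 1 + 1 ≠ 0 := by positivity
  simp only [pow_add, pow_one, Real.Gamma_one]
  generalize ((-1 : ℝ) ^ n) = u
  field_simp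
  ring

lemma sum_jacCoeff_extend (a b t : ℝ) {n N : ℕ} (h : n + 1 ≤ N) :
    ∑ j ∈ Finset.range (n + 1), jacCoeff a b n j * t ^ j =
      ∑ j ∈ Finset.range N, jacCoeff a b n j * t ^ j := by
  apply Finset.sum_subset (by simpa using h)
  intro j _ hj
  rw [jacCoeff_eq_zero a b (by simpa using hj), zero_mul]

/-- Power expansion of the Jacobi polynomials at the left endpoint `-1`: the explicit coefficients
satisfy the three-term recurrence. -/
lemma jacobiP_eq_sum (a b : ℝ) (hb : 0 < b) (hs : 0 < a + b) (t : ℝ) (n : ℕ) :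
    jacobiP a b n (2 * t - 1) = ∑ j ∈ Finset.range (n + 1), jacCoeff a b n j * t ^ j := by
  induction n using Nat.twoStepInduction with
  | zero =>
    have e1 : Real.Gamma (a + b + 1) ≠ 0 := (Real.Gamma_pos_of_pos (by positivity)).ne'
    have e2 : Real.Gamma (b + 1) ≠ 0 := (Real.Gamma_pos_of_pos (by positivity)).ne'
    simp [jacobiP, jacCoeff]
    field_simp
  | one =>
    have e1 : Real.Gamma (a + b + 2) ≠ 0 := (Real.Gamma_pos_of_pos (by positivity)).ne'
    have e2 : Real.Gamma (b + 1) ≠ 0 := (Real.Gamma_pos_of_pos (by positivity)).ne'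
    have h2 : Real.Gamma (1 + 1) = 1 := by rw [Real.Gamma_add_one one_ne_zero]; simp
    simp only [jacobiP, jacCoeff, Finset.sum_range_succ, Finset.sum_range_zero]
    push_cast
    simp only [add_zero, sub_zero, zero_add, sub_self, Real.Gamma_one, h2]
    rw [gamma_succ_of_pos (x := b + 1) (y := 1 + b + 1) (by positivity) (by ring),
      gamma_succ_of_pos (x := a + b + 2) (y := 1 + a + b + 1 + 1) (by positivity) (by ring),
      show 1 + a + b + 1 = a + b + 2 by ring]
    have q : b + 1 ≠ 0 := by positivity
    field_simp
    ring
  | more n ih1 ih2 =>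
    rw [jacobiP, ih1, ih2, Finset.sum_range_succ' _ (n + 2), jacCoeff_rec_zero a b hb hs,
      sum_jacCoeff_extend a b t (show n + 1 ≤ (n + 2) + 1 by omega)]
    simp only [jacCoeff_rec_succ a b hb hs]
    have h2 : ∑ j ∈ Finset.range (n + 1 + 1), jacCoeff a b (n + 1) j * t ^ j =
        ∑ j ∈ Finset.range (n + 2), jacCoeff a b (n + 1) (j + 1) * t ^ (j + 1)
          + jacCoeff a b (n + 1) 0 := by
      rw [sum_jacCoeff_extend a b t (show n + 1 + 1 ≤ (n + 2) + 1 by omega),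
        Finset.sum_range_succ']
      simp
    have h3 : ∑ j ∈ Finset.range (n + 2), (2 * jacobiA a b (n + 1) * jacCoeff a b (n + 1) j
          - (jacobiA a b (n + 1) + jacobiB a b (n + 1)) * jacCoeff a b (n + 1) (j + 1)
          - jacobiC a b (n + 1) * jacCoeff a b n (j + 1)) * t ^ (j + 1) =
        2 * jacobiA a b (n + 1) * t
            * ∑ j ∈ Finset.range (n + 1 + 1), jacCoeff a b (n + 1) j * t ^ j
          - (jacobiA a b (n + 1) + jacobiB a b (n + 1))
            * ∑ j ∈ Finset.range (n + 2), jacCoeff a b (n + 1) (j + 1) * t ^ (j + 1)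
          - jacobiC a b (n + 1)
            * ∑ j ∈ Finset.range (n + 2), jacCoeff a b n (j + 1) * t ^ (j + 1) := by
      simp only [Finset.mul_sum, ← Finset.sum_sub_distrib]
      apply Finset.sum_congr rfl
      intro j _
      ring
    rw [h3, Finset.sum_range_succ' _ (n + 2)]
    linear_combination (-(jacobiA a b (n + 1) + jacobiB a b (n + 1))) * h2

/-- The connection formula `(2k+3) P_k^{(1,1)} = (k+3) P_k^{(1,2)} + (k+1) P_{k-1}^{(1,2)}`, with
`k = n + 1`, on the level of coefficients. -/
lemma jacCoeff_connection (n j : ℕ) :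
    (2 * (n : ℝ) + 5) * jacCoeff 1 1 (n + 1) j =
      ((n : ℝ) + 4) * jacCoeff 1 2 (n + 1) j + ((n : ℝ) + 2) * jacCoeff 1 2 n j := by
  have hn : (0 : ℝ) ≤ n := n.cast_nonneg
  have hj : (0 : ℝ) ≤ j := j.cast_nonneg
  unfold jacCoeff
  push_cast
  rw [show (n : ℝ) + 1 + 1 + 1 = n + 3 by ring, show (n : ℝ) + 3 + 1 = n + 4 by ring,
    show (n : ℝ) + 1 + 1 + 2 + 1 = n + 5 by ring, show (n : ℝ) + 1 + 2 + 1 = n + 4 by ring,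
    show (n : ℝ) + 2 + 1 = n + 3 by ring,
    gamma_succ_of_pos (x := n + 4 + j) (y := (n : ℝ) + 5 + j) (by positivity) (by ring),
    gamma_succ_of_pos (x := n + 4) (y := (n : ℝ) + 5) (by positivity) (by ring),
    gamma_succ_of_pos (x := n + 3) (y := (n : ℝ) + 4) (by positivity) (by ring),
    gamma_succ_of_pos (x := j + 1 + 1) (y := (j : ℝ) + 2 + 1) (by positivity) (by ring),
    show (n : ℝ) + 1 - j + 1 = n - j + 2 by ring,
    gamma_inv_succ (x := (n : ℝ) - j + 1) (y := n - j + 2) (by ring)]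
  have e1 : Real.Gamma ((n : ℝ) + 3) ≠ 0 := (Real.Gamma_pos_of_pos (by positivity)).ne'
  have e2 : Real.Gamma ((j : ℝ) + 1 + 1) ≠ 0 := (Real.Gamma_pos_of_pos (by positivity)).ne'
  have e3 : Real.Gamma ((j : ℝ) + 1) ≠ 0 := (Real.Gamma_pos_of_pos (by positivity)).ne'
  generalize Real.Gamma ((n : ℝ) + 3) = G1 at *
  generalize Real.Gamma ((j : ℝ) + 1 + 1) = G2 at *
  generalize Real.Gamma ((j : ℝ) + 1) = G3 at *
  -- This reciprocal may be zero (large `j`), so it is kept as a factor and never cancelled.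
  generalize (Real.Gamma ((n : ℝ) - j + 2))⁻¹ = R at *
  generalize Real.Gamma ((n : ℝ) + 4 + j) = H at *
  generalize (j : ℝ) = y at *
  generalize (n : ℝ) = z at *
  have q1 : z + 3 ≠ 0 := by positivity
  have q2 : z + 4 ≠ 0 := by positivity
  have q4 : y + 1 + 1 ≠ 0 := by positivity
  simp only [pow_add, pow_one]
  field_simp
  ring

/-- Multiplying the coefficients of `P_n^{(1,2)}` by `Γ(j+3)/Γ(j+3-σ)`, as the fractional derivative
does, gives a multiple of `P_n^{(1+σ,2-σ)}`; the sum of the two parameters is unchanged. -/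
lemma jacCoeff_shift (σ : ℝ) (hσ : σ < 2) (n j : ℕ) :
    jacCoeff 1 2 n j * (Real.Gamma (j + 3) / Real.Gamma (j + 3 - σ)) =
      Real.Gamma (n + 3) / Real.Gamma (n + 3 - σ) * jacCoeff (1 + σ) (2 - σ) n j := by
  have hn : (0 : ℝ) ≤ n := n.cast_nonneg
  have hj : (0 : ℝ) ≤ j := j.cast_nonneg
  unfold jacCoeff
  rw [show (n : ℝ) + 2 + 1 = n + 3 by ring, show (j : ℝ) + 2 + 1 = j + 3 by ring,
    show (n : ℝ) + (1 + σ) + (2 - σ) + 1 = n + 1 + 2 + 1 by ring,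
    show (n : ℝ) + (2 - σ) + 1 = n + 3 - σ by ring,
    show (j : ℝ) + (2 - σ) + 1 = j + 3 - σ by ring]
  have e1 : Real.Gamma ((n : ℝ) + 3 - σ) ≠ 0 := (Real.Gamma_pos_of_pos (by linarith)).ne'
  have e2 : Real.Gamma ((j : ℝ) + 3) ≠ 0 := (Real.Gamma_pos_of_pos (by positivity)).ne'
  field_simp

/-! ### Fractional derivatives of powers -/

/-- The Beta integral on `[0, y]`. -/
lemma integral_rpow_mul_pow (α y : ℝ) (hα : 0 < α) (hy : 0 < y) (p : ℕ) :
    ∫ t in (0 : ℝ)..y, (y - t) ^ (α - 1) * t ^ p =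
      y ^ (p + α) * (Real.Gamma (p + 1) * Real.Gamma α / Real.Gamma (p + 1 + α)) := by
  have h := Complex.betaIntegral_scaled ((p : ℂ) + 1) (α : ℂ) hy
  rw [Complex.betaIntegral_eq_Gamma_mul_div _ _ (by simp; positivity) (by simpa using hα)] at h
  have hL : ∫ t in (0 : ℝ)..y, (t : ℂ) ^ ((p : ℂ) + 1 - 1) * ((y : ℂ) - t) ^ ((α : ℂ) - 1) =
      ((∫ t in (0 : ℝ)..y, (y - t) ^ (α - 1) * t ^ p : ℝ) : ℂ) := by
    rw [← intervalIntegral.integral_ofReal]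
    apply intervalIntegral.integral_congr
    intro t ht
    rw [Set.uIcc_of_le hy.le] at ht
    simp only [add_sub_cancel_right, Complex.cpow_natCast]
    rw [Complex.ofReal_mul, Complex.ofReal_cpow (sub_nonneg.2 ht.2)]
    push_cast
    ring
  rw [hL] at h
  apply Complex.ofReal_injective
  rw [h]
  push_cast
  rw [Complex.ofReal_cpow hy.le, ← Complex.Gamma_ofReal, ← Complex.Gamma_ofReal,
    ← Complex.Gamma_ofReal]
  push_cast
  congr 2
  ring

/-- The fractional integral of a polynomial divisible by `t ^ 2`. -/
lemma leftRLFun_sum (σ : ℝ) (m : ℕ) (hm : σ < m) (N : ℕ) (w : ℕ → ℝ) (y : ℝ) (hy : 0 < y) :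
    leftRLFun σ m (fun t => ∑ j ∈ Finset.range N, w j * t ^ (j + 2)) y =
      ∑ j ∈ Finset.range N, (w j * (Real.Gamma (j + 3) / Real.Gamma (j + 3 + (m - σ))))
        * y ^ ((j : ℝ) + 2 + (m - σ)) := by
  have hα : 0 < (m : ℝ) - σ := by linarith
  have hG : Real.Gamma ((m : ℝ) - σ) ≠ 0 := (Real.Gamma_pos_of_pos hα).ne'
  have hint : ∀ j : ℕ, IntervalIntegrable
      (fun t : ℝ => w j * ((y - t) ^ ((m : ℝ) - σ - 1) * t ^ (j + 2)))
      MeasureTheory.volume 0 y := by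
    intro j
    apply IntervalIntegrable.const_mul
    apply IntervalIntegrable.mul_continuousOn
    · have := (intervalIntegral.intervalIntegrable_rpow' (a := y - 0) (b := y - y)
        (r := (m : ℝ) - σ - 1) (by linarith)).comp_sub_left y
      simpa using this
    · fun_prop
  unfold leftRLFun
  have : ∀ t : ℝ, (y - t) ^ ((m : ℝ) - σ - 1) * ∑ j ∈ Finset.range N, w j * t ^ (j + 2) =
      ∑ j ∈ Finset.range N, w j * ((y - t) ^ ((m : ℝ) - σ - 1) * t ^ (j + 2)) := by
    intro t
    rw [Finset.mul_sum]
    exact Finset.sum_congr rfl fun j _ => by ring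
  simp only [this]
  rw [intervalIntegral.integral_finsetSum fun j _ => hint j, Finset.mul_sum]
  apply Finset.sum_congr rfl
  intro j _
  rw [intervalIntegral.integral_const_mul, integral_rpow_mul_pow _ y hα hy]
  push_cast
  rw [show (j : ℝ) + 2 + 1 = j + 3 by ring]
  field_simp

lemma iteratedDeriv_rpow_gamma (q : ℝ) (m : ℕ) (hq : (m : ℝ) < q + 1) (x : ℝ) (hx : 0 < x) :
    iteratedDeriv m (fun y : ℝ => y ^ q) x =
      Real.Gamma (q + 1) / Real.Gamma (q + 1 - m) * x ^ (q - m) := by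
  induction m generalizing x with
  | zero =>
    have : Real.Gamma (q + 1) ≠ 0 := (Real.Gamma_pos_of_pos (by simpa using hq)).ne'
    simp [this]
  | succ m ih =>
    push_cast at hq ⊢
    have hev : iteratedDeriv m (fun y : ℝ => y ^ q) =ᶠ[nhds x]
        fun y => Real.Gamma (q + 1) / Real.Gamma (q + 1 - m) * y ^ (q - m) := by
      filter_upwards [lt_mem_nhds hx] with y hy
      exact ih (by linarith) y hy
    rw [iteratedDeriv_succ, hev.deriv_eq,
      ((Real.hasDerivAt_rpow_const (Or.inl hx.ne')).const_mul _).deriv,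
      gamma_succ_of_pos (x := q - m) (y := q + 1 - m) (by linarith) (by ring),
      show q + 1 - ((m : ℝ) + 1) = q - m by ring, show q - ((m : ℝ) + 1) = q - m - 1 by ring]
    have h0 : q - m ≠ 0 := by
      have : 0 < q - m := by linarith
      exact this.ne'
    have : Real.Gamma (q - m) ≠ 0 := (Real.Gamma_pos_of_pos (by linarith)).ne'
    field_simp

lemma hasIterDerivAt_of_contDiffAt {m : ℕ} {F : ℝ → ℝ} {x : ℝ} (h : ContDiffAt ℝ m F x) :
    HasIterDerivAt m F x := by
  intro j hj
  rw [iteratedDeriv_eq_equiv_comp]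
  refine (LinearIsometryEquiv.differentiableAt _).comp x ?_
  exact h.differentiableAt_iteratedFDeriv (by exact_mod_cast hj)

/-- The fractional derivative of a polynomial divisible by `t ^ 2`, term by term. -/
lemma leftRL_deriv_sum (σ : ℝ) (hσ : σ < 2) (m : ℕ) (hm : σ < m) (N : ℕ) (w : ℕ → ℝ)
    (x : ℝ) (hx : 0 < x) :
    HasIterDerivAt m (leftRLFun σ m (fun t => ∑ j ∈ Finset.range N, w j * t ^ (j + 2))) x ∧
    iteratedDeriv m (leftRLFun σ m (fun t => ∑ j ∈ Finset.range N, w j * t ^ (j + 2))) x =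
      x ^ (2 - σ) * ∑ j ∈ Finset.range N,
        w j * (Real.Gamma (j + 3) / Real.Gamma (j + 3 - σ)) * x ^ j := by
  have hev : leftRLFun σ m (fun t => ∑ j ∈ Finset.range N, w j * t ^ (j + 2)) =ᶠ[nhds x]
      fun y => ∑ j ∈ Finset.range N, (w j * (Real.Gamma (j + 3) / Real.Gamma (j + 3 + (m - σ))))
        * y ^ ((j : ℝ) + 2 + (m - σ)) := by
    filter_upwards [lt_mem_nhds hx] with y hy
    exact leftRLFun_sum σ m hm N w y hy
  have hp : ∀ j : ℕ, ContDiffAt ℝ m (fun y : ℝ =>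
      (w j * (Real.Gamma (j + 3) / Real.Gamma (j + 3 + (m - σ)))) * y ^ ((j : ℝ) + 2 + (m - σ)))
      x := fun j => contDiffAt_const.mul (Real.contDiffAt_rpow_const_of_ne hx.ne')
  constructor
  · exact hasIterDerivAt_of_contDiffAt ((ContDiffAt.sum fun j _ => hp j).congr_of_eventuallyEq hev)
  · rw [hev.iteratedDeriv_eq, iteratedDeriv_fun_sum fun j _ => hp j, Finset.mul_sum]
    apply Finset.sum_congr rfl
    intro j _
    have hj : (0 : ℝ) ≤ j := j.cast_nonneg
    rw [iteratedDeriv_const_mul_field, iteratedDeriv_rpow_gamma _ m (by linarith) x hx,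
      show (j : ℝ) + 2 + (m - σ) + 1 = j + 3 + (m - σ) by ring,
      show (j : ℝ) + 3 + (m - σ) - m = j + 3 - σ by ring,
      show (j : ℝ) + 2 + (m - σ) - m = (2 - σ) + j by ring, Real.rpow_add hx, Real.rpow_natCast]
    have : Real.Gamma ((j : ℝ) + 3 + (m - σ)) ≠ 0 := (Real.Gamma_pos_of_pos (by linarith)).ne'
    field_simp

/-! ### The closed form -/

/-- Closed form of the left Riemann–Liouville fractional derivative of
order `σ ∈ (0,1) ∪ (1,2)` of `t ↦ λ_k t² P_k^{(1,1)}(2t/ℓ - 1)` (`k ≥ 1`) at `x ∈ (0, ℓ]`. -/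
theorem left_RL_quadratic_part
    (ℓ σ : ℝ) (hℓ : 0 < ℓ) (hσ : σ ∈ Set.Ioo (0:ℝ) 1 ∪ Set.Ioo (1:ℝ) 2)
    (m : ℕ) (hm : (m : ℝ) - 1 ≤ σ ∧ σ < m)
    (k : ℕ) (hk : 1 ≤ k) (x : ℝ) (hx : x ∈ Set.Ioc 0 ℓ) :
    HasIterDerivAt m
      (leftRLFun σ m (fun t => lamCoef ℓ k * t^2 * jacobiP 1 1 k (2*t/ℓ - 1))) x ∧
    iteratedDeriv m
      (leftRLFun σ m (fun t => lamCoef ℓ k * t^2 * jacobiP 1 1 k (2*t/ℓ - 1))) x =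
      ((k:ℝ)+2) * Real.Gamma ((k:ℝ)+4) / (ℓ^3*((k:ℝ)+1)*Real.Gamma ((k:ℝ)+3-σ)) *
        x ^ (2 - σ) * jacobiP (1+σ) (2-σ) k (2*x/ℓ - 1)
      + Real.Gamma ((k:ℝ)+3) / (ℓ^3*Real.Gamma ((k:ℝ)+2-σ)) *
        x ^ (2 - σ) * jacobiP (1+σ) (2-σ) (k-1) (2*x/ℓ - 1) := by
  have hσ2 : σ < 2 := by
    rcases hσ with h | h
    · linarith [h.2]
    · exact h.2
  obtain ⟨n, rfl⟩ : ∃ n, k = n + 1 := ⟨k - 1, by omega⟩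
  have hn : (0 : ℝ) ≤ n := n.cast_nonneg
  have hfun : (fun t => lamCoef ℓ (n + 1) * t^2 * jacobiP 1 1 (n + 1) (2*t/ℓ - 1)) =
      fun t => ∑ j ∈ Finset.range (n + 1 + 1),
        (lamCoef ℓ (n + 1) * jacCoeff 1 1 (n + 1) j / ℓ ^ j) * t ^ (j + 2) := by
    funext t
    rw [show 2 * t / ℓ - 1 = 2 * (t / ℓ) - 1 by ring,
      jacobiP_eq_sum 1 1 (by norm_num) (by norm_num), Finset.mul_sum]
    apply Finset.sum_congr rfl
    intro j _
    rw [div_pow]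
    ring
  obtain ⟨h1, h2⟩ := leftRL_deriv_sum σ hσ2 m hm.2 (n + 1 + 1)
    (fun j => lamCoef ℓ (n + 1) * jacCoeff 1 1 (n + 1) j / ℓ ^ j) x hx.1
  rw [hfun]
  refine ⟨h1, ?_⟩
  rw [h2, Nat.add_sub_cancel, show 2 * x / ℓ - 1 = 2 * (x / ℓ) - 1 by ring,
    jacobiP_eq_sum (1 + σ) (2 - σ) (by linarith) (by linarith),
    jacobiP_eq_sum (1 + σ) (2 - σ) (by linarith) (by linarith),
    sum_jacCoeff_extend (1 + σ) (2 - σ) (x / ℓ) (show n + 1 ≤ n + 1 + 1 by omega),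
    Finset.mul_sum, Finset.mul_sum, Finset.mul_sum, ← Finset.sum_add_distrib]
  apply Finset.sum_congr rfl
  intro j _
  have hc := jacCoeff_connection n j
  have s1 := jacCoeff_shift σ hσ2 (n + 1) j
  have s2 := jacCoeff_shift σ hσ2 n j
  push_cast at s1 ⊢
  unfold lamCoef
  push_cast
  rw [show (n : ℝ) + 1 + 2 - σ = n + 3 - σ by ring,
    gamma_succ_of_pos (x := n + 1 + 3) (y := (n : ℝ) + 1 + 4) (by positivity) (by ring),
    gamma_succ_of_pos (x := n + 3) (y := (n : ℝ) + 1 + 3) (by positivity) (by ring)] at *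
  generalize Real.Gamma (j + 3) / Real.Gamma (j + 3 - σ) = D at *
  have key : (2 * (n : ℝ) + 5) * (jacCoeff 1 1 (n + 1) j * D) =
      ((n : ℝ) + 4) * ((n + 3) * Real.Gamma (n + 3) / Real.Gamma (n + 1 + 3 - σ)
        * jacCoeff (1 + σ) (2 - σ) (n + 1) j)
      + ((n : ℝ) + 2) * (Real.Gamma (n + 3) / Real.Gamma (n + 3 - σ)
        * jacCoeff (1 + σ) (2 - σ) n j) := by
    rw [← s1, ← s2]
    linear_combination D * hc
  have e1 : Real.Gamma ((n : ℝ) + 1 + 3 - σ) ≠ 0 := (Real.Gamma_pos_of_pos (by linarith)).ne'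
  have e2 : Real.Gamma ((n : ℝ) + 3 - σ) ≠ 0 := (Real.Gamma_pos_of_pos (by linarith)).ne'
  have q : (n : ℝ) + 1 + 1 ≠ 0 := by positivity
  rw [div_pow]
  have lhs : x ^ (2 - σ) * (((n : ℝ) + 1 + 2) * (2 * (n + 1) + 3) / (ℓ ^ 3 * (n + 1 + 1))
      * jacCoeff 1 1 (n + 1) j / ℓ ^ j * D * x ^ j) =
      x ^ (2 - σ) * x ^ j / ℓ ^ j * ((n + 3) / (ℓ ^ 3 * (n + 1 + 1)))
        * ((2 * (n : ℝ) + 5) * (jacCoeff 1 1 (n + 1) j * D)) := by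
    ring
  rw [lhs, key]
  field_simp
  ring
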